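/- Let p ≥ 3 be a prime. There exists a constant C > 0 depending only on p such that: for every real-split central division ℚ-algebra A of degree p, every commutative ℚ-subalgebra E ⊆ A with dim_ℚ E = p (necessarily a field of degree p over ℚ) with 𝒪_E the integral closure of ℤ in E, every z ∈ GL_p(ℝ), every δ > 0 and every positive integer m, the number of γ ∈ 𝒪_E with nr(γ) = m for which there exists k ∈ SO(p) with every entry of m^{-1/p}·z⁻¹(ι γ)z − k of absolute value less than δ is at most C · τ(m)^{p-1} · (1+δ)^{p-1}. -/

import Mathlib

open Matrix

/-- `IsSO k` : `k ∈ SO(n)`. -/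
def IsSO {n : ℕ} (k : Matrix (Fin n) (Fin n) ℝ) : Prop :=
  kᵀ * k = 1 ∧ k.det = 1

lemma ratmap {M : Type*} [Ring M] [Algebra ℝ M] [Algebra ℚ M] (q : ℚ) :
    algebraMap ℝ M (q : ℝ) = algebraMap ℚ M q := by
  have := RingHom.congr_fun (Subsingleton.elim ((algebraMap ℝ M).comp (algebraMap ℚ ℝ))
    (algebraMap ℚ M)) q
  simpa using this

lemma poly_eq {F : Type*} [Field F] {a b : Polynomial F} (ha : a.Monic) (hb : b.Monic)
    (h : a ∣ b) (hd : b.natDegree ≤ a.natDegree) : a = b :=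
  Polynomial.eq_of_monic_of_associated ha hb
    (Polynomial.associated_of_dvd_of_natDegree_le h hb.ne_zero hd)

lemma tens_inj {A M ι' : Type*} [DivisionRing A] [CharZero A] [Ring M] [Nontrivial M] [Algebra ℝ M]
    [Algebra ℚ M]
    (φ : A →ₐ[ℚ] M) (hc : Subalgebra.center ℚ A = ⊥) (c : ι' → ℝ) (hli : LinearIndependent ℚ c)
    (s : Finset ι') : ∀ a : ι' → A, ∑ i ∈ s, c i • φ (a i) = 0 → ∀ i ∈ s, a i = 0 := by
  classical
  induction s using Finset.induction_on with
  | empty => simp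
  | insert j s hj ih =>
    intro a ha
    have key : a j = 0 := by
      by_contra hne
      set b : ι' → A := fun i => (a j)⁻¹ * a i with hb
      have hbj : b j = 1 := by simp [hb, hne]
      have hbs : ∑ i ∈ insert j s, c i • φ (b i) = 0 := by
        have := congrArg (fun t => φ (a j)⁻¹ * t) ha
        simpa [hb, Finset.mul_sum, mul_smul_comm] using this
      have hcomm : ∀ t : A, ∀ i ∈ s, t * b i = b i * t := by
        intro t
        have h1 : ∑ i ∈ insert j s, c i • φ (t * b i - b i * t) = 0 := by
          have e1 := congrArg (fun u => φ t * u - u * φ t) hbs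
          simpa [Finset.mul_sum, Finset.sum_mul, mul_smul_comm, smul_mul_assoc,
            ← Finset.sum_sub_distrib, smul_sub] using e1
        rw [Finset.sum_insert hj] at h1
        simp only [hbj, mul_one, one_mul, sub_self, map_zero, smul_zero, zero_add] at h1
        intro i hi
        exact sub_eq_zero.mp (ih _ h1 i hi)
      have hq : ∀ i ∈ insert j s, ∃ q : ℚ, b i = algebraMap ℚ A q := by
        intro i hi
        rcases Finset.mem_insert.mp hi with rfl | hi
        · exact ⟨1, by simp [hbj]⟩
        · have : b i ∈ Subalgebra.center ℚ A := by
            rw [Subalgebra.mem_center_iff]; intro t; exact hcomm t i hi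
          rw [hc, Algebra.mem_bot] at this
          obtain ⟨q, hq⟩ := this
          exact ⟨q, hq.symm⟩
      choose! q hq using hq
      have h2 : ∑ i ∈ insert j s, q i • c i = 0 := by
        have : algebraMap ℝ M (∑ i ∈ insert j s, q i • c i) = 0 := by
          rw [← hbs, map_sum]
          refine Finset.sum_congr rfl fun i hi => ?_
          rw [hq i hi, AlgHom.commutes, Algebra.smul_def, Algebra.smul_def, map_mul]
          rw [← Algebra.commutes]
          congr 1
          simp [ratmap]
        exact (map_eq_zero_iff _ (algebraMap ℝ M).injective).mp this
      have h3 := linearIndependent_iff'.mp hli _ _ h2 j (Finset.mem_insert_self _ _)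
      have h4 := hq j (Finset.mem_insert_self _ _)
      rw [h3, hbj] at h4
      simp at h4
    rw [Finset.sum_insert hj, key] at ha
    simp only [map_zero, smul_zero, zero_add] at ha
    intro i hi
    rcases Finset.mem_insert.mp hi with rfl | hi
    · exact key
    · exact ih a ha i hi

lemma poly_zero {A M : Type*} [DivisionRing A] [CharZero A] [Ring M] [Nontrivial M] [Algebra ℝ M]
    [Algebra ℚ M]
    (φ : A →ₐ[ℚ] M) (hc : Subalgebra.center ℚ A = ⊥) (x : A) (hx : IsIntegral ℚ x)
    (P : Polynomial ℝ)
    (hdeg : P.natDegree < (minpoly ℚ x).natDegree) (hP : Polynomial.aeval (φ x) P = 0) : P = 0 := by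
  classical
  let B := Module.Basis.ofVectorSpace ℚ ℝ
  set d := P.natDegree + 1
  let s : Finset _ := (Finset.range d).biUnion fun k => (B.repr (P.coeff k)).support
  let Q : _ → Polynomial ℚ := fun i => ∑ k ∈ Finset.range d,
    Polynomial.monomial k (B.repr (P.coeff k) i)
  have h1 : ∑ i ∈ s, B i • φ (Polynomial.aeval x (Q i)) = 0 := by
    rw [← hP, Polynomial.aeval_eq_sum_range]
    simp only [Q, map_sum, Finset.smul_sum, Polynomial.aeval_monomial]
    rw [Finset.sum_comm]
    refine Finset.sum_congr rfl fun k hk => ?_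
    have : P.coeff k = ∑ i ∈ s, (B.repr (P.coeff k) i) • B i := by
      conv_lhs => rw [← B.linearCombination_repr (P.coeff k)]
      rw [Finsupp.linearCombination_apply, Finsupp.sum]
      refine Finset.sum_subset (Finset.subset_biUnion_of_mem (fun k => (B.repr (P.coeff k)).support) hk) ?_
      intro i _ hi
      rw [Finsupp.notMem_support_iff.mp hi, zero_smul]
    rw [show (P.coeff k) • φ x ^ k = (∑ i ∈ s, (B.repr (P.coeff k) i) • B i) • φ x ^ k by rw [← this]]
    rw [Finset.sum_smul]
    refine Finset.sum_congr rfl fun i hi => ?_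
    simp only [map_mul, map_pow, AlgHom.commutes, Algebra.smul_def]
    rw [← mul_assoc]; congr 1
    rw [← Algebra.commutes]
    simp [ratmap]
  have h2 := tens_inj φ hc (fun i => B i) B.linearIndependent s _ h1
  have h3 : ∀ i ∈ s, Q i = 0 := by
    intro i hi
    by_contra hne
    have := minpoly.degree_le_of_ne_zero ℚ x hne (h2 i hi)
    have h5 := Polynomial.natDegree_le_natDegree this
    have h4 : (Q i).natDegree ≤ P.natDegree := by
      refine Polynomial.natDegree_sum_le_of_forall_le _ _ fun k hk => ?_
      refine (Polynomial.natDegree_monomial_le _).trans ?_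
      have := Finset.mem_range.mp hk; omega
    omega
  ext k
  rw [Polynomial.coeff_zero]
  by_cases hk : k < d
  · rw [← B.repr.map_eq_zero_iff]
    ext i
    by_contra hne
    have hi : i ∈ s := Finset.mem_biUnion.mpr ⟨k, Finset.mem_range.mpr hk, Finsupp.mem_support_iff.mpr hne⟩
    have := congrArg (fun q => Polynomial.coeff q k) (h3 i hi)
    simp only [Q, Polynomial.finsetSum_coeff, Polynomial.coeff_monomial] at this
    rw [Finset.sum_ite_eq' , if_pos (Finset.mem_range.mpr hk)] at this
    exact hne (by simpa using this)
  · exact Polynomial.coeff_eq_zero_of_natDegree_lt (by omega)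

lemma charpoly_key {p : ℕ} (hp : p.Prime) {A : Type*} [DivisionRing A] [CharZero A]
    (φ : A →ₐ[ℚ] Matrix (Fin p) (Fin p) ℝ) (hc : Subalgebra.center ℚ A = ⊥)
    {K : Type*} [Field K] [NumberField K] (hK : Module.finrank ℚ K = p) (f : K →+* A) (x : K) :
    (∀ σ : K →+* ℂ, Polynomial.aeval (σ x) (φ (f x)).charpoly = 0) ∧
    (φ (f x)).det = ((Algebra.norm ℚ x : ℚ) : ℝ) := by
  have : NeZero p := ⟨hp.ne_zero⟩
  set M := φ (f x)
  by_cases hx : x ∈ (algebraMap ℚ K).range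
  · obtain ⟨q, rfl⟩ := hx
    have hM : M = algebraMap ℝ _ (q : ℝ) := by
      have : M = algebraMap ℚ _ q := by
        rw [← AlgHom.commutes φ q]; simp [M]
      rw [this]
      simp [Matrix.algebraMap_eq_diagonal]
    constructor
    · intro σ
      rw [hM, Matrix.algebraMap_eq_diagonal, Matrix.charpoly_diagonal]
      simp [hp.ne_zero]
    · rw [hM, Algebra.norm_algebraMap, hK, Matrix.algebraMap_eq_diagonal, Matrix.det_diagonal]
      simp
  · have hxi : IsIntegral ℚ x := Algebra.IsIntegral.isIntegral x
    have hd : (minpoly ℚ x).natDegree = p := by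
      have h1 : (minpoly ℚ x).natDegree ∣ p := hK ▸ minpoly.degree_dvd hxi
      rcases (Nat.dvd_prime hp).mp h1 with h | h
      · exact absurd (minpoly.natDegree_eq_one_iff.mp h) hx
      · exact h
    let f' : K →ₐ[ℚ] A := f.toRatAlgHom
    have hmp : minpoly ℚ (f x) = minpoly ℚ x := minpoly.algHom_eq f' f.injective x
    have hfi : IsIntegral ℚ (f x) := hxi.map f'
    have hMi : IsIntegral ℝ M := Algebra.IsIntegral.isIntegral M
    have hcm : M.charpoly.natDegree = p := by simp [Matrix.charpoly_natDegree_eq_dim]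
    have hdM : p ≤ (minpoly ℝ M).natDegree := by
      by_contra hlt
      refine minpoly.ne_zero hMi (poly_zero φ hc (f x) hfi _ ?_ (minpoly.aeval ℝ M))
      rw [hmp, hd]; omega
    have e1 : minpoly ℝ M = M.charpoly := by
      refine poly_eq (minpoly.monic hMi)
        (Matrix.charpoly_monic M) (Matrix.minpoly_dvd_charpoly M) ?_
      omega
    have e2 : minpoly ℝ M = (minpoly ℚ x).map (algebraMap ℚ ℝ) := by
      refine poly_eq (minpoly.monic hMi)
        ((minpoly.monic hxi).map _) ?_ ?_
      · apply minpoly.dvd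
        rw [Polynomial.aeval_map_algebraMap]
        have := congrArg φ (minpoly.aeval ℚ (f x))
        rwa [← Polynomial.aeval_algHom_apply, hmp, map_zero] at this
      · rw [Polynomial.natDegree_map, hd]; exact hdM
    have e3 : M.charpoly = (minpoly ℚ x).map (algebraMap ℚ ℝ) := e1 ▸ e2
    constructor
    · intro σ
      rw [e3, Polynomial.aeval_map_algebraMap]
      have : σ x = σ.toRatAlgHom x := rfl
      rw [this, Polynomial.aeval_algHom_apply, minpoly.aeval, map_zero]
    · rw [Matrix.det_eq_sign_charpoly_coeff, e3, Algebra.norm_apply, LinearMap.det_eq_sign_charpoly_coeff]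
      have e4 : minpoly ℚ (Algebra.lmul ℚ K x) = minpoly ℚ x :=
        minpoly.algHom_eq (Algebra.lmul ℚ K) Algebra.lmul_injective x
      have e5 : minpoly ℚ x = (Algebra.lmul ℚ K x).charpoly := by
        refine poly_eq (minpoly.monic hxi)
          (LinearMap.charpoly_monic _) ?_ ?_
        · rw [← e4]; exact LinearMap.minpoly_dvd_charpoly _
        rw [LinearMap.charpoly_natDegree, hK, hd]
      rw [← e5, hK, Polynomial.coeff_map]; simp


lemma eig_bound {n : ℕ} (M : Matrix (Fin n) (Fin n) ℝ) (b : ℝ) (hM : ∀ i j, |M i j| ≤ b)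
    (l : ℂ) (hl : Polynomial.aeval l M.charpoly = 0) : ‖l‖ ≤ n * b := by
  let N : Matrix (Fin n) (Fin n) ℂ := M.map Complex.ofRealHom
  have h1 : N.charpoly.IsRoot l := by
    rw [Matrix.charpoly_map, Polynomial.IsRoot, Polynomial.eval_map]
    exact hl
  have h2 : Module.End.HasEigenvalue (Matrix.toLin' N) l := by
    rw [Module.End.hasEigenvalue_iff_isRoot_charpoly]
    simpa using h1
  obtain ⟨k, hk⟩ := eigenvalue_mem_ball h2
  rw [mem_closedBall_iff_norm] at hk
  have h3 : ‖l‖ ≤ ∑ j, ‖N k j‖ := by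
    rw [← Finset.add_sum_erase _ _ (Finset.mem_univ k)]
    have := norm_le_norm_add_norm_sub (N k k) l
    rw [norm_sub_rev] at this
    linarith
  refine h3.trans ?_
  calc ∑ j, ‖N k j‖ ≤ ∑ j : Fin n, b := Finset.sum_le_sum fun j _ => by
        simpa [N] using hM k j
    _ = n * b := by simp

lemma small_count (d : ℕ) (B : ℝ) : ∃ N : ℕ, ∀ (K : Type) [Field K] [NumberField K],
    Module.finrank ℚ K = d → ∀ F : Finset K,
    (∀ x ∈ F, IsIntegral ℤ x ∧ ∀ σ : K →+* ℂ, ‖σ x‖ ≤ B) → F.card ≤ N := by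
  classical
  set L : ℤ := ⌈max B 1 ^ d * (d.choose (d / 2) : ℝ)⌉ with hL
  refine ⟨d * (Fintype.piFinset fun _ : Fin (d+1) => Finset.Icc (-L) L).card, ?_⟩
  intro K _ _ hK F hF
  let g : K → Fin (d+1) → ℤ := fun x i => (minpoly ℤ x).coeff i
  have hdeg : ∀ x ∈ F, (minpoly ℤ x).natDegree ≤ d := by
    intro x hx
    have h := minpoly.isIntegrallyClosed_eq_field_fractions' ℚ (hF x hx).1
    have : (minpoly ℤ x).natDegree = (minpoly ℚ x).natDegree := by
      rw [h, (minpoly.monic (hF x hx).1).natDegree_map]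
    rw [this, ← hK]
    exact minpoly.natDegree_le x
  refine Finset.card_le_mul_card_image_of_maps_to (f := g) ?_ d ?_
  · intro x hx
    rw [Fintype.mem_piFinset]
    intro i
    have h := minpoly.isIntegrallyClosed_eq_field_fractions' ℚ (hF x hx).1
    have h2 := NumberField.Embeddings.coeff_bdd_of_norm_le (hF x hx).2 i
    rw [h, Polynomial.coeff_map, hK] at h2
    have h3 : |((minpoly ℤ x).coeff i : ℝ)| ≤ max B 1 ^ d * (d.choose (d / 2) : ℝ) := by
      rw [← Int.norm_eq_abs]
      simpa using h2
    have h4 : |((minpoly ℤ x).coeff i : ℝ)| ≤ (L : ℝ) := h3.trans (Int.le_ceil _)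
    have h5 : |(minpoly ℤ x).coeff i| ≤ L := by exact_mod_cast h4
    rw [Finset.mem_Icc]
    exact abs_le.mp h5
  · intro b hb
    by_cases hne : ∃ x ∈ F, g x = b
    · obtain ⟨x, hx, rfl⟩ := hne
      have hsub : (F.filter fun a => g a = g x) ⊆ ((minpoly ℤ x).map (algebraMap ℤ K)).roots.toFinset := by
        intro y hy
        rw [Finset.mem_filter] at hy
        have e : minpoly ℤ y = minpoly ℤ x := by
          ext i
          by_cases hi : i < d + 1
          · exact congrFun hy.2 ⟨i, hi⟩
          · rw [Polynomial.coeff_eq_zero_of_natDegree_lt, Polynomial.coeff_eq_zero_of_natDegree_lt]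
            · have := hdeg x hx; omega
            · have := hdeg y hy.1; omega
        rw [Multiset.mem_toFinset, Polynomial.mem_roots ((minpoly.monic (hF x hx).1).map _).ne_zero,
          Polynomial.IsRoot, Polynomial.eval_map, ← e]
        exact minpoly.aeval ℤ y
      calc _ ≤ _ := Finset.card_le_card hsub
        _ ≤ _ := Multiset.toFinset_card_le _
        _ ≤ _ := Polynomial.card_roots' _
        _ ≤ _ := Polynomial.natDegree_map_le
        _ ≤ d := hdeg x hx
    · rw [Finset.filter_eq_empty_iff.mpr]
      · simp
      · intro x hx h; exact hne ⟨x, hx, h⟩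

lemma color {α β : Type*} (N : ℕ) (hN : 0 < N) (s : β → Finset α) (h : ∀ b, (s b).card ≤ N)
    (u : α → β) : ∃ c : α → Fin N, ∀ a a', a ∈ s (u a) → a' ∈ s (u a') → u a = u a' → c a = c a' →
      a = a' := by
  classical
  have hg : ∀ b, ∃ g : α → Fin N, ∀ x ∈ s b, ∀ y ∈ s b, g x = g y → x = y := by
    intro b
    refine ⟨fun a => if ha : a ∈ s b then Fin.castLE (h b) ((s b).equivFin ⟨a, ha⟩)
      else ⟨0, hN⟩, ?_⟩
    intro x hx y hy hxy
    simp only [hx, hy, dif_pos] at hxy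
    have := (s b).equivFin.injective (Fin.castLE_injective _ hxy)
    exact congrArg Subtype.val this
  choose g hg using hg
  refine ⟨fun a => g (u a) a, ?_⟩
  intro a a' ha ha' hu hc
  simp only [hu] at hc
  exact hg (u a') a (hu ▸ ha) a' ha' hc

lemma ideal_inj (n m : ℕ) (hm : 1 ≤ m) (K : Type) [Field K] [NumberField K]
    (hK : Module.finrank ℚ K = n + 1) :
    ∃ d : Ideal (NumberField.RingOfIntegers K) → Fin n → ℕ,
      (∀ I, Ideal.absNorm I = m → ∀ j, d I j ∣ m) ∧
      (∀ I J, Ideal.absNorm I = m → Ideal.absNorm J = m → d I = d J → I = J) := by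
  classical
  let S := NumberField.RingOfIntegers K
  let u : Ideal S → ℕ := fun P => (Ideal.absNorm P).minFac
  let s : ℕ → Finset (Ideal S) := fun q =>
    if q.Prime then IsDedekindDomain.primesOverFinset (Ideal.span {(q : ℤ)}) S else ∅
  have hs : ∀ q, (s q).card ≤ n + 1 := by
    intro q
    by_cases hq : q.Prime
    · have : (Ideal.span {(q : ℤ)}).IsMaximal :=
        haveI := Fact.mk hq; Int.ideal_span_isMaximal_of_prime q
      simp only [s, hq, if_true]
      rw [← hK]
      refine Ideal.card_primesOverFinset_le_finrank S ℚ K ?_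
      simpa using hq.ne_zero
    · simp [s, hq]
  have hprime : ∀ P : Ideal S, P.IsPrime → P ≠ ⊥ → (u P).Prime ∧ P ∈ s (u P) ∧
      ∃ k, 0 < k ∧ Ideal.absNorm P = (u P) ^ k := by
    intro P hP h0
    have : P.IsMaximal := hP.isMaximal h0
    obtain ⟨q, k, hk, hmem, hq, he⟩ := Ideal.exists_prime_and_absNorm_eq_pow P
    have hu : u P = q := by
      simp only [u, he]
      exact hq.pow_minFac hk.ne'
    rw [hu]
    refine ⟨hq, ?_, k, hk, he⟩
    simp only [s, hq, if_true]
    have hmax : (Ideal.span {(q : ℤ)}).IsMaximal :=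
        haveI := Fact.mk hq; Int.ideal_span_isMaximal_of_prime q
    rw [IsDedekindDomain.mem_primesOverFinset_iff (by simpa using hq.ne_zero)]
    refine ⟨hP, ⟨?_⟩⟩
    refine hmax.eq_of_le (Ideal.IsPrime.under ℤ P).ne_top ?_
    rw [Ideal.span_singleton_le_iff_mem, Ideal.mem_comap]
    simpa using hmem
  obtain ⟨c, hc⟩ := color (n+1) (Nat.succ_pos n) s hs u
  let nf : Ideal S → Multiset (Ideal S) := fun I => UniqueFactorizationMonoid.normalizedFactors I
  let D : Ideal S → Fin (n+1) → ℕ := fun I j =>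
    ∏ P ∈ (nf I).toFinset with c P = j, Ideal.absNorm P ^ (nf I).count P
  have hnf : ∀ I : Ideal S, ∀ P ∈ nf I, P.IsPrime ∧ P ≠ ⊥ := by
    intro I P hP
    have h1 := UniqueFactorizationMonoid.prime_of_normalized_factor P hP
    exact ⟨Ideal.isPrime_of_prime h1, h1.ne_zero⟩
  have hprod : ∀ I : Ideal S, I ≠ ⊥ → ∏ j, D I j = Ideal.absNorm I := by
    intro I hI
    conv_rhs => rw [← Ideal.prod_normalizedFactors_eq_self hI]
    rw [map_multiset_prod, Finset.prod_multiset_map_count]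
    exact Finset.prod_fiberwise _ _ _
  have hfac : ∀ I : Ideal S, ∀ P : Ideal S, P.IsPrime → P ≠ ⊥ →
      (D I (c P)).factorization (u P) = (nf I).count P * (Ideal.absNorm P).factorization (u P) := by
    intro I P hP h0
    simp only [D]
    rw [Nat.factorization_prod]
    · rw [Finset.sum_apply']
      simp only [Nat.factorization_pow, Finsupp.smul_apply, smul_eq_mul]
      rw [Finset.sum_eq_single P]
      · intro Q hQ hne
        simp only [Finset.mem_filter, Multiset.mem_toFinset] at hQ
        obtain ⟨hQp, hQ0⟩ := hnf I Q hQ.1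
        obtain ⟨a1, a2, k, hk, a3⟩ := hprime Q hQp hQ0
        obtain ⟨b1, b2, -⟩ := hprime P hP h0
        have : u Q ≠ u P := fun h => hne (hc Q P a2 b2 h hQ.2)
        rw [a3, Nat.factorization_pow, a1.factorization]
        simp [this]
      · intro h
        have : P ∉ nf I := by simpa using h
        rw [Multiset.count_eq_zero_of_notMem this, zero_mul]
    · intro Q hQ
      simp only [Finset.mem_filter, Multiset.mem_toFinset] at hQ
      obtain ⟨hQp, hQ0⟩ := hnf I Q hQ.1
      exact pow_ne_zero _ (by rwa [Ne, Ideal.absNorm_eq_zero_iff])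
  have hne : ∀ I : Ideal S, Ideal.absNorm I = m → I ≠ ⊥ := by
    rintro I hI rfl
    simp at hI; omega
  refine ⟨fun I j => D I j.castSucc, ?_, ?_⟩
  · intro I hI j
    rw [← hI, ← hprod I (hne I hI)]
    exact Finset.dvd_prod_of_mem _ (Finset.mem_univ _)
  · intro I J hI hJ hd
    have hall : ∀ j, D I j = D J j := by
      have hpI := (hprod I (hne I hI)).trans hI
      have hpJ := (hprod J (hne J hJ)).trans hJ
      rw [Fin.prod_univ_castSucc] at hpI hpJ
      have hd' : ∀ j : Fin n, D I j.castSucc = D J j.castSucc := fun j => congrFun hd j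
      have hlast : D I (Fin.last n) = D J (Fin.last n) := by
        simp only [hd'] at hpI
        have h0 : (∏ j : Fin n, D J j.castSucc) ≠ 0 := by
          intro h; rw [h] at hpI; omega
        exact Nat.eq_of_mul_eq_mul_left (Nat.pos_of_ne_zero h0) (hpI.trans hpJ.symm)
      intro j
      refine Fin.lastCases hlast hd' j
    have hnfeq : nf I = nf J := by
      ext P
      by_cases hP : P.IsPrime ∧ P ≠ ⊥
      · have e1 := hfac I P hP.1 hP.2
        have e2 := hfac J P hP.1 hP.2
        rw [hall, e2] at e1
        obtain ⟨a1, a2, k, hk, a3⟩ := hprime P hP.1 hP.2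
        have : 0 < (Ideal.absNorm P).factorization (u P) := by
          rw [a3, Nat.factorization_pow, a1.factorization]; simpa using hk
        exact (Nat.eq_of_mul_eq_mul_right this e1).symm
      · rw [Multiset.count_eq_zero_of_notMem, Multiset.count_eq_zero_of_notMem]
        · exact fun h => hP (hnf _ _ h)
        · exact fun h => hP (hnf _ _ h)
    rw [← Ideal.prod_normalizedFactors_eq_self (hne I hI),
      ← Ideal.prod_normalizedFactors_eq_self (hne J hJ)]
    exact congrArg Multiset.prod hnfeq

lemma count_main (n : ℕ) : ∃ C : ℝ, 0 < C ∧ ∀ (K : Type) [Field K] [NumberField K],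
    Module.finrank ℚ K = n + 1 → ∀ R : ℝ, 1 ≤ R → ∀ m : ℕ, 1 ≤ m →
    ∀ F : Finset (NumberField.RingOfIntegers K),
    (∀ x ∈ F, Algebra.norm ℤ x = m ∧ ∀ σ : K →+* ℂ,
      ‖σ (x : K)‖ ≤ R * (m : ℝ) ^ ((1 : ℝ) / ((n + 1 : ℕ) : ℝ))) →
    (F.card : ℝ) ≤ C * (m.divisors.card : ℝ) ^ n * R ^ n := by
  classical
  obtain ⟨N, hN⟩ := small_count (n+1) (Real.exp 1)
  refine ⟨N * (3 * (n+1)^2)^n + 1, by positivity, ?_⟩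
  intro K _ _ hK R hR m hm F hF
  obtain ⟨d, hd1, hd2⟩ := ideal_inj n m hm K hK
  let e : Fin (n+1) ≃ (K →+* ℂ) := (Fintype.equivFinOfCardEq
    ((NumberField.Embeddings.card K ℂ).trans hK)).symm
  set T := Real.log R with hT
  have hT0 : 0 ≤ T := Real.log_nonneg hR
  have hm0 : (0:ℝ) < m := by exact_mod_cast hm
  let l : NumberField.RingOfIntegers K → Fin (n+1) → ℝ := fun x j =>
    Real.log ‖e j (x : K)‖ - Real.log m / (n+1)
  have hx0 : ∀ x ∈ F, (x : K) ≠ 0 := by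
    intro x hx h
    have h1 := (hF x hx).1
    have : x = 0 := by exact_mod_cast h
    rw [this, Algebra.norm_zero] at h1
    have : m = 0 := by exact_mod_cast h1.symm
    omega
  have habs : ∀ x ∈ F, Ideal.absNorm (Ideal.span {x}) = m := by
    intro x hx
    rw [Ideal.absNorm_span_singleton, (hF x hx).1]; simp
  have hsum : ∀ x ∈ F, ∑ j, l x j = 0 := by
    intro x hx
    have h1 : ∏ j, ‖e j (x : K)‖ = m := by
      rw [e.prod_comp (fun σ : K →+* ℂ => ‖σ (x : K)‖)]
      have h2 := Algebra.norm_eq_prod_embeddings ℚ ℂ (x : K)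
      rw [← Algebra.coe_norm_int, (hF x hx).1] at h2
      have h3 : ∏ σ : K →ₐ[ℚ] ℂ, σ (x : K) = ∏ σ : K →+* ℂ, σ (x : K) :=
        (Fintype.prod_equiv (RingHom.equivRatAlgHom K ℂ) _ _ (fun σ => rfl)).symm
      rw [← norm_prod, ← h3, ← h2]
      simp
    simp only [l, Finset.sum_sub_distrib]
    rw [← Real.log_prod (fun j _ => by simpa using hx0 x hx), h1]
    simp
    field_simp
    simp
  have hup : ∀ x ∈ F, ∀ j, l x j ≤ T := by
    intro x hx j
    have h1 := (hF x hx).2 (e j)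
    have h2 : 0 < ‖e j (x : K)‖ := by simpa using hx0 x hx
    have h3 := Real.log_le_log h2 h1
    rw [Real.log_mul (by positivity) (by positivity), Real.log_rpow hm0] at h3
    simp only [l]
    push_cast at h3
    have : 1 / ((n:ℝ) + 1) * Real.log m = Real.log m / (n+1) := by ring
    linarith
  have hlow : ∀ x ∈ F, ∀ j, -(n * T) ≤ l x j := by
    intro x hx j
    have h1 := hsum x hx
    rw [← Finset.add_sum_erase _ _ (Finset.mem_univ j)] at h1
    have h2 : ∑ i ∈ Finset.univ.erase j, l x i ≤ ∑ i ∈ (Finset.univ : Finset (Fin (n+1))).erase j, T :=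
      Finset.sum_le_sum fun i _ => hup x hx i
    rw [Finset.sum_const, Finset.card_erase_of_mem (Finset.mem_univ j)] at h2
    rw [Finset.card_univ, Fintype.card_fin, Nat.add_sub_cancel, nsmul_eq_mul] at h2
    linarith
  set L : ℕ := ⌈((n:ℝ)+1)^2 * T⌉₊ with hL
  have hLle : ((n:ℝ)+1)^2 * T ≤ L := Nat.le_ceil _
  have hLlt : (L:ℝ) < ((n:ℝ)+1)^2 * T + 1 := Nat.ceil_lt_add_one (by positivity)
  let t1 : Finset (Fin n → ℕ) := Fintype.piFinset fun _ => m.divisors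
  let t2 : Finset (Fin n → ℤ) := Fintype.piFinset fun _ => Finset.Icc (-(L:ℤ)) L
  let g : NumberField.RingOfIntegers K → (Fin n → ℕ) × (Fin n → ℤ) := fun x =>
    (d (Ideal.span {x}), fun j => ⌊((n:ℝ)+1) * l x j.castSucc⌋)
  have hcard : F.card ≤ N * (t1 ×ˢ t2).card := by
    refine Finset.card_le_mul_card_image_of_maps_to (f := g) ?_ N ?_
    · intro x hx
      rw [Finset.mem_product, Fintype.mem_piFinset, Fintype.mem_piFinset]
      constructor
      · intro j
        rw [Nat.mem_divisors]
        exact ⟨hd1 _ (habs x hx) j, by omega⟩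
      · intro j
        rw [Finset.mem_Icc]
        have hn : (0:ℝ) ≤ n := Nat.cast_nonneg n
        have a1 := hup x hx j.castSucc
        have a2 := hlow x hx j.castSucc
        constructor
        · rw [Int.le_floor]
          push_cast
          have : ((n:ℝ)+1) * (-(n*T)) ≤ ((n:ℝ)+1) * l x j.castSucc :=
            mul_le_mul_of_nonneg_left a2 (by positivity)
          nlinarith [mul_nonneg hn hT0]
        · have : ((n:ℝ)+1) * l x j.castSucc ≤ L := by
            have : ((n:ℝ)+1) * l x j.castSucc ≤ ((n:ℝ)+1) * T :=
              mul_le_mul_of_nonneg_left a1 (by positivity)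
            nlinarith [mul_nonneg hn hT0, mul_nonneg (mul_nonneg hn hn) hT0]
          have h2 := (Int.floor_le _).trans this
          exact Int.cast_le.mp (h2.trans_eq (by simp))
    · intro b hb
      by_cases hne : ∃ x ∈ F, g x = b
      · obtain ⟨y, hy, rfl⟩ := hne
        have hinj : Function.Injective
            (fun x : NumberField.RingOfIntegers K => (x : K) / (y : K)) := by
          intro a b hab
          have := (div_left_inj' (hx0 y hy)).mp hab
          exact_mod_cast this
        rw [← Finset.card_image_of_injective _ hinj]
        refine hN K hK _ ?_
        intro w hw
        rw [Finset.mem_image] at hw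
        obtain ⟨x, hx, rfl⟩ := hw
        rw [Finset.mem_filter] at hx
        obtain ⟨hx, hgx⟩ := hx
        have hg1 : d (Ideal.span {x}) = d (Ideal.span {y}) := congrArg Prod.fst hgx
        have hg2 := congrArg Prod.snd hgx
        constructor
        · have h1 := hd2 _ _ (habs x hx) (habs y hy) hg1
          have h2 : y ∣ x := by
            rw [← Ideal.span_singleton_le_span_singleton, h1]
          obtain ⟨t, rfl⟩ := h2
          have : ((y * t : NumberField.RingOfIntegers K) : K) / (y : K) = (t : K) := by
            push_cast
            field_simp [hx0 y hy]
          rw [this]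
          exact NumberField.RingOfIntegers.isIntegral_coe t
        · have hclose : ∀ j : Fin n, |l x j.castSucc - l y j.castSucc| ≤ 1 / (n+1) := by
            intro j
            have h1 : ⌊((n:ℝ)+1) * l x j.castSucc⌋ = ⌊((n:ℝ)+1) * l y j.castSucc⌋ :=
              congrFun hg2 j
            have h2 := Int.abs_sub_lt_one_of_floor_eq_floor h1
            rw [← mul_sub, abs_mul, abs_of_pos (by positivity : (0:ℝ) < n+1)] at h2
            rw [le_div_iff₀ (by positivity)]
            linarith
          have hall : ∀ j, |l x j - l y j| ≤ 1 := by
            intro j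
            refine Fin.lastCases ?_ (fun i => ?_) j
            · have h1 := hsum x hx
              have h2 := hsum y hy
              rw [Fin.sum_univ_castSucc] at h1 h2
              have h3 : l x (Fin.last n) - l y (Fin.last n) =
                  - ∑ j : Fin n, (l x j.castSucc - l y j.castSucc) := by
                rw [Finset.sum_sub_distrib]; linarith
              rw [h3, abs_neg]
              refine (Finset.abs_sum_le_sum_abs _ _).trans ?_
              refine (Finset.sum_le_sum fun j _ => hclose j).trans ?_
              simp
              rw [← div_eq_mul_inv, div_le_one (by positivity)]
              linarith
            · refine (hclose i).trans ?_
              rw [div_le_one (by positivity)]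
              linarith [(Nat.cast_nonneg n : (0:ℝ) ≤ n)]
          intro σ
          obtain ⟨j, rfl⟩ := e.surjective σ
          have h1 := (abs_le.mp (hall j)).2
          simp only [l] at h1
          have hxp : 0 < ‖e j (x : K)‖ := by simpa using hx0 x hx
          have hyp : 0 < ‖e j (y : K)‖ := by simpa using hx0 y hy
          rw [map_div₀, norm_div, ← Real.log_le_iff_le_exp (by positivity),
            Real.log_div hxp.ne' hyp.ne']
          linarith
      · rw [Finset.filter_eq_empty_iff.mpr]
        · simp
        · intro x hx h; exact hne ⟨x, hx, h⟩
  have hc2 : ((t1 ×ˢ t2).card : ℝ) = (m.divisors.card : ℝ)^n * (2 * L + 1)^n := by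
    rw [Finset.card_product]
    simp only [t1, t2, Fintype.card_piFinset_const, Int.card_Icc]
    rw [show ((L:ℤ) + 1 - -(L:ℤ)).toNat = 2 * L + 1 by omega]
    push_cast
    ring
  have hRT : 1 + T ≤ R := by
    have := Real.log_le_sub_one_of_pos (by linarith : 0 < R)
    linarith
  have hLR : (2 * (L:ℝ) + 1) ≤ (3 * (n+1)^2) * R := by
    have hn : (1:ℝ) ≤ ((n:ℝ)+1)^2 := by
      have : (0:ℝ) ≤ n := Nat.cast_nonneg n
      nlinarith
    nlinarith
  calc (F.card : ℝ) ≤ N * ((t1 ×ˢ t2).card : ℝ) := by exact_mod_cast hcard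
    _ = N * ((m.divisors.card : ℝ)^n * (2 * L + 1)^n) := by rw [hc2]
    _ ≤ N * ((m.divisors.card : ℝ)^n * ((3 * (n+1)^2) * R)^n) := by gcongr
    _ = N * (3 * (n+1)^2)^n * (m.divisors.card : ℝ)^n * R^n := by rw [mul_pow]; ring
    _ ≤ _ := by gcongr; linarith

lemma exists_field {A : Type} [DivisionRing A] [CharZero A] (E : Subalgebra ℚ A)
    (hcomm : ∀ x ∈ E, ∀ y ∈ E, x * y = y * x) (p : ℕ) (hp : 0 < p)
    (hE : Module.finrank ℚ E = p) :
    ∃ (K : Type) (_ : Field K) (_ : NumberField K) (f : K →+* A),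
      Module.finrank ℚ K = p ∧ (∀ a ∈ E, ∃ x, f x = a) := by
  let i0 : CommRing E := { (inferInstance : Ring E) with
    mul_comm := fun a b => Subtype.ext (hcomm a a.2 b b.2) }
  have hfin : Module.Finite ℚ E := Module.finite_of_finrank_pos (by omega)
  have hF : IsField E := by
    have : Algebra.IsIntegral ℚ E := inferInstance
    exact isField_of_isIntegral_of_isField' (Field.toIsField ℚ)
  let i1 : Field E := hF.toField
  have hcz : CharZero E := ⟨fun a b h => by
    have := congrArg Subtype.val h
    simpa using this⟩
  have hmod : ∀ m1 m2 : Module ℚ E, m1 = m2 := fun m1 m2 => Subsingleton.elim _ _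
  refine ⟨E, i1, @NumberField.mk _ _ hcz ?_, E.subtype, ?_, fun a ha => ⟨⟨a, ha⟩, rfl⟩⟩
  · convert hfin
    exact hmod _ _
  · refine Eq.trans ?_ hE
    congr! 1
    exact hmod _ _


lemma finset_bound {α : Type*} (S : Set α) (B : ℝ)
    (h : ∀ F : Finset α, (F : Set α) ⊆ S → (F.card : ℝ) ≤ B) :
    S.Finite ∧ (S.ncard : ℝ) ≤ B := by
  have hfin : S.Finite := by
    by_contra hinf
    obtain ⟨F, hF, hc⟩ := Set.Infinite.exists_subset_card_eq hinf (⌊B⌋₊ + 1)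
    have h1 := h F hF
    rw [hc] at h1
    have h2 := Nat.lt_floor_add_one B
    push_cast at h1
    linarith
  refine ⟨hfin, ?_⟩
  rw [Set.ncard_eq_toFinset_card S hfin]
  exact h _ (by simp)

lemma so_entry {n : ℕ} (k : Matrix (Fin n) (Fin n) ℝ) (hk : kᵀ * k = 1) (i j : Fin n) :
    |k i j| ≤ 1 := by
  have h1 := congrFun (congrFun hk j) j
  rw [Matrix.mul_apply, Matrix.one_apply_eq] at h1
  simp only [Matrix.transpose_apply] at h1
  have h2 : k i j * k i j ≤ ∑ x, k x j * k x j :=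
    Finset.single_le_sum (f := fun x => k x j * k x j) (fun x _ => mul_self_nonneg _)
      (Finset.mem_univ i)
  rw [abs_le]
  constructor <;> nlinarith




/-- For a prime `p ≥ 3` there is `C > 0` depending only on `p` such that:
for every degree-`p` commutative subalgebra (subfield) `E ⊆ A` with ring of integers `𝒪_E`
(the integral closure of `ℤ` in `E`), every `z ∈ GL_p(ℝ)`, every `δ > 0` and every positive
integer `m`, the number of `γ ∈ 𝒪_E` with `nr γ = m` such that `m^(-1/p) · z⁻¹ (ι γ) z` is
within `δ` (entrywise) of some `k ∈ SO(p)` is at most `C · τ(m)^(p-1) · (1+δ)^(p-1)`. -/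
theorem stmt11 (p : ℕ) (hp : p.Prime) (hp3 : 3 ≤ p) :
    ∃ C : ℝ, 0 < C ∧
      ∀ (A : Type) [DivisionRing A] [CharZero A]
        (ι : A →ₐ[ℚ] Matrix (Fin p) (Fin p) ℝ),
        Function.Injective ι →
        Subalgebra.center ℚ A = ⊥ →
        Module.finrank ℚ A = p ^ 2 →
        ∀ E : Subalgebra ℚ A, (∀ x ∈ E, ∀ y ∈ E, x * y = y * x) →
          Module.finrank ℚ E = p →
        ∀ z : Matrix.GeneralLinearGroup (Fin p) ℝ,
        ∀ δ : ℝ, 0 < δ →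
        ∀ m : ℕ, 1 ≤ m →
        {γ : A | γ ∈ E ∧ IsIntegral ℤ γ ∧ (ι γ).det = (m : ℝ) ∧
            ∃ k : Matrix (Fin p) (Fin p) ℝ, IsSO k ∧
              ∀ i j, |(((m : ℝ) ^ (-(1 : ℝ) / (p : ℝ))) •
                ((↑z⁻¹ : Matrix (Fin p) (Fin p) ℝ) * ι γ *
                  (↑z : Matrix (Fin p) (Fin p) ℝ)) - k) i j| < δ}.Finite ∧
        ({γ : A | γ ∈ E ∧ IsIntegral ℤ γ ∧ (ι γ).det = (m : ℝ) ∧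
            ∃ k : Matrix (Fin p) (Fin p) ℝ, IsSO k ∧
              ∀ i j, |(((m : ℝ) ^ (-(1 : ℝ) / (p : ℝ))) •
                ((↑z⁻¹ : Matrix (Fin p) (Fin p) ℝ) * ι γ *
                  (↑z : Matrix (Fin p) (Fin p) ℝ)) - k) i j| < δ}.ncard : ℝ) ≤
          C * (m.divisors.card : ℝ) ^ (p - 1) * (1 + δ) ^ (p - 1) := by
  obtain ⟨C, hC, hmain⟩ := count_main (p - 1)
  refine ⟨C * (p : ℝ) ^ (p - 1), by have := hp.pos; positivity, ?_⟩
  intro A _ _ ι hι hcen hA E hcomm hE z δ hδ m hm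
  obtain ⟨K, iF, iN, f, hK, hf⟩ := exists_field E hcomm p hp.pos hE
  have hp1 : p - 1 + 1 = p := Nat.sub_add_cancel hp.one_le
  have hp0 : (0 : ℝ) < p := by exact_mod_cast hp.pos
  have hpone : (1 : ℝ) ≤ p := by exact_mod_cast hp.one_le
  have hm0 : (0 : ℝ) < m := by exact_mod_cast hm
  apply finset_bound
  intro F hF
  let g : NumberField.RingOfIntegers K → A := fun x => f (x : K)
  have hg : Function.Injective g := fun a b h => by
    have := f.injective h
    exact_mod_cast this
  let F' := F.preimage g hg.injOn
  have himg : F'.card = F.card := by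
    classical
    rw [← Finset.card_image_of_injective F' hg]
    congr 1
    ext γ
    simp only [F', Finset.mem_image, Finset.mem_preimage]
    constructor
    · rintro ⟨x, hx, rfl⟩; exact hx
    · intro hγ
      obtain ⟨h1, h2, -⟩ := hF hγ
      obtain ⟨x, rfl⟩ := hf γ h1
      have hx : IsIntegral ℤ x := (isIntegral_algHom_iff f.toIntAlgHom f.injective).mp h2
      exact ⟨⟨x, hx⟩, hγ, rfl⟩
  have hb := hmain K (hK.trans hp1.symm) (p * (1 + δ)) (by nlinarith) m hm F' ?_
  · rw [himg] at hb
    refine hb.trans (le_of_eq ?_)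
    rw [mul_pow]; ring
  · intro x hx
    have hx' : g x ∈ F := by simpa [F'] using hx
    obtain ⟨-, -, hdet, k, hk, hent⟩ := hF hx'
    obtain ⟨hroot, hnorm⟩ := charpoly_key hp ι hcen hK f (x : K)
    constructor
    · have h1 : ((Algebra.norm ℚ (x : K) : ℚ) : ℝ) = (m : ℝ) := hnorm.symm.trans hdet
      rw [← Algebra.coe_norm_int] at h1
      exact_mod_cast h1
    · intro σ
      rw [hp1]
      have hr := hroot σ
      rw [← Matrix.charpoly_units_conj' z] at hr
      have hpos : 0 < (m : ℝ) ^ ((1 : ℝ) / (p : ℝ)) := by positivity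
      have h3 := eig_bound _ ((1 + δ) * (m : ℝ) ^ ((1 : ℝ) / (p : ℝ))) ?_ (σ x) hr
      · linarith
      · intro i j
        have h4 := hent i j
        have h5 := so_entry k hk.1 i j
        rw [Matrix.sub_apply, Matrix.smul_apply, smul_eq_mul, neg_div, Real.rpow_neg hm0.le] at h4
        have h6 : |((m : ℝ) ^ ((1 : ℝ) / (p : ℝ)))⁻¹ *
            ((↑z⁻¹ : Matrix (Fin p) (Fin p) ℝ) * ι (g x) *
              (↑z : Matrix (Fin p) (Fin p) ℝ)) i j| ≤ 1 + δ := by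
          have := abs_sub_abs_le_abs_sub (((m : ℝ) ^ ((1 : ℝ) / (p : ℝ)))⁻¹ *
            ((↑z⁻¹ : Matrix (Fin p) (Fin p) ℝ) * ι (g x) *
              (↑z : Matrix (Fin p) (Fin p) ℝ)) i j) (k i j)
          linarith
        rw [abs_mul, abs_of_pos (inv_pos.mpr hpos), inv_mul_le_iff₀ hpos] at h6
        rw [mul_comm (1 + δ)]
        rw [Matrix.coe_units_inv] at h6
        exact h6
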